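/- arXiv:1812.07882 — 2 statements merged into one kernel-verified Lean document; each statement's English description precedes it below -/
import Mathlib

section
/- Let F be an algebraically closed field of characteristic p > 0, and let P be a projective F S_n-module. Fix 1 ≤ m ≤ n and regard S_m × S_{n-m} ≤ S_n. Then the fixed-point space P^{S_m}, regarded as an F S_{n-m}-module, is projective. -/
/-!
Higman's criterion: for a finite group `G`, a `K[G]`-module `M` is projective if and only if some
`K`-linear endomorphism `θ` of `M` satisfies `∑ g, g θ g⁻¹ = 1`
(`exists_trace_eq_id_of_projective`, `projective_of_trace_eq_id`). Neither direction needs `M` to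
be finite-dimensional.

If `θ` is such an endomorphism for `P` over `S_n`, summing its conjugates over a transversal gives
`θ'` with `∑ h, h θ' h⁻¹ = 1`, where `h` runs over `S_m × S_{n-m}`
(`exists_trace_eq_id_restrict`). For `v ∈ P^{S_m}`, writing `h = τ σ` with `σ ∈ S_m` and
`τ ∈ S_{n-m}`, the factor `σ⁻¹` fixes `τ⁻¹ v`, so that `v = ∑ τ, τ (N θ') τ⁻¹ v` with
`N = ∑ σ, σ`. Since `N` takes values in `P^{S_m}`, the map `N θ'` restricts to `P^{S_m}`, and the
criterion applies to it over `S_{n-m}`.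
-/

open Equiv

variable (F : Type*) [Field F] (m k : ℕ)

/-- The embedding `S_m → S_{m+k}` as permutations of the first block of
`Fin m ⊕ Fin k`. -/
def inlPerm : Equiv.Perm (Fin m) →* Equiv.Perm (Fin m ⊕ Fin k) :=
  (Equiv.Perm.sumCongrHom (Fin m) (Fin k)).comp (MonoidHom.inl _ _)

/-- The embedding `S_{n-m} → S_n` (`n = m + k`) as permutations of the second block of
`Fin m ⊕ Fin k`. -/
def inrPerm : Equiv.Perm (Fin k) →* Equiv.Perm (Fin m ⊕ Fin k) :=
  (Equiv.Perm.sumCongrHom (Fin m) (Fin k)).comp (MonoidHom.inr _ _)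

theorem inlPerm_mul_inrPerm (σ : Equiv.Perm (Fin m)) (τ : Equiv.Perm (Fin k)) :
    inlPerm m k σ * inrPerm m k τ = inrPerm m k τ * inlPerm m k σ := by
  simp only [inlPerm, inrPerm, MonoidHom.comp_apply, MonoidHom.inl_apply,
    MonoidHom.inr_apply, ← map_mul, Prod.mk_mul_mk, one_mul, mul_one]

variable {V : Type*} [AddCommGroup V] [Module F V]

/-- The `S_m`-fixed points of an `F S_n`-module (`n = m + k`), as a submodule. -/
def smFixed (ρ : Representation F (Equiv.Perm (Fin m ⊕ Fin k)) V) : Submodule F V where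
  carrier := {v | ∀ σ : Equiv.Perm (Fin m), ρ (inlPerm m k σ) v = v}
  add_mem' := by intro a b ha hb σ; rw [map_add, ha σ, hb σ]
  zero_mem' := by intro σ; rw [map_zero]
  smul_mem' := by intro c v hv σ; rw [map_smul, hv σ]

theorem smFixed_stable (ρ : Representation F (Equiv.Perm (Fin m ⊕ Fin k)) V)
    (τ : Equiv.Perm (Fin k)) {v : V} (hv : v ∈ smFixed F m k ρ) :
    ρ (inrPerm m k τ) v ∈ smFixed F m k ρ := by
  intro σ
  have h := inlPerm_mul_inrPerm m k σ τ
  calc ρ (inlPerm m k σ) (ρ (inrPerm m k τ) v)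
      = ρ (inlPerm m k σ * inrPerm m k τ) v := by rw [map_mul]; rfl
    _ = ρ (inrPerm m k τ * inlPerm m k σ) v := by rw [h]
    _ = ρ (inrPerm m k τ) (ρ (inlPerm m k σ) v) := by rw [map_mul]; rfl
    _ = ρ (inrPerm m k τ) v := by rw [hv σ]

/-- The fixed-point functor: the `S_m`-fixed points of an `F S_n`-module, as a
representation of `S_{n-m}` (`n = m + k`). -/
def fixedPointRep (ρ : Representation F (Equiv.Perm (Fin m ⊕ Fin k)) V) :
    Representation F (Equiv.Perm (Fin k)) (smFixed F m k ρ) where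
  toFun τ := (ρ (inrPerm m k τ)).restrict (fun v hv => smFixed_stable F m k ρ τ hv)
  map_one' := by
    ext v
    simp [LinearMap.restrict_apply]
  map_mul' τ₁ τ₂ := by
    ext v
    simp [LinearMap.restrict_apply, map_mul]

/-! ### Higman's criterion -/

section Higman

open scoped TensorProduct

variable {K G M : Type*} [Field K] [Group G] [Fintype G] [AddCommGroup M]
  [Module K M] [Module (MonoidAlgebra K G) M] [IsScalarTower K (MonoidAlgebra K G) M]

/-- A projective module over a finite group algebra has a linear endomorphism whose trace
`∑ g, g θ g⁻¹` is the identity: split the canonical surjection from a free module, and let `θ`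
read off the coefficients of `1 : G`. -/
theorem exists_trace_eq_id_of_projective [Module.Projective (MonoidAlgebra K G) M] :
    ∃ θ : M →ₗ[K] M, ∀ v : M,
      ∑ g : G, MonoidAlgebra.of K G g • θ (MonoidAlgebra.of K G g⁻¹ • v) = v := by
  classical
  obtain ⟨s, hs⟩ := Module.Projective.out (R := MonoidAlgebra K G) (P := M)
  let c : MonoidAlgebra K G →ₗ[K] K :=
    { toFun := fun a => a.coeff 1
      map_add' := fun a b => by simp
      map_smul' := fun r a => by simp }
  -- The `K`-linear map sending the generator `g • x` of the free module to `x` if `g = 1`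
  -- and to `0` otherwise.
  let Θ : (M →₀ MonoidAlgebra K G) →ₗ[K] M :=
    Finsupp.linearCombination K id ∘ₗ Finsupp.mapRange.linearMap c
  refine ⟨Θ ∘ₗ s.restrictScalars K, fun v => ?_⟩
  have key : ∀ w : M →₀ MonoidAlgebra K G,
      ∑ g : G, MonoidAlgebra.of K G g • Θ (MonoidAlgebra.of K G g⁻¹ • w) =
        Finsupp.linearCombination (MonoidAlgebra K G) id w := by
    intro w
    induction w using Finsupp.induction_linear with
    | zero => simp
    | add a b ha hb => simp only [smul_add, map_add, Finset.sum_add_distrib, ha, hb]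
    | single x a =>
      induction a using MonoidAlgebra.induction_linear with
      | zero => simp
      | add a b ha hb =>
        simp only [Finsupp.single_add, smul_add, map_add, Finset.sum_add_distrib, ha, hb]
      | single h r =>
        have hc : ∀ g : G, c (MonoidAlgebra.single (g⁻¹ * h) r) = if g = h then r else 0 := by
          intro g
          change (MonoidAlgebra.single (g⁻¹ * h) r).coeff 1 = _
          simp [Finsupp.single_apply, inv_mul_eq_one]
        simp only [Θ, Finsupp.smul_single, smul_eq_mul, MonoidAlgebra.of_apply,
          MonoidAlgebra.single_mul_single, one_mul, LinearMap.comp_apply,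
          Finsupp.mapRange.linearMap_apply, Finsupp.mapRange_single,
          Finsupp.linearCombination_single, id, hc, ite_smul, zero_smul, smul_ite, smul_zero,
          Finset.sum_ite_eq', Finset.mem_univ, if_true]
        have hr : (MonoidAlgebra.single h r : MonoidAlgebra K G) =
            r • MonoidAlgebra.single h 1 := by simp
        rw [hr, smul_assoc, smul_algebra_smul_comm]
  simpa [map_smul, hs v] using key (s v)

/-- Conversely, if `∑ g, g θ g⁻¹` is the identity, then `v ↦ ∑ g, g ⊗ θ (g⁻¹ v)` is an equivariant
section of the action map `K[G] ⊗ M → M`, whose source is free. -/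
theorem projective_of_trace_eq_id (θ : M →ₗ[K] M)
    (hθ : ∀ v : M, ∑ g : G, MonoidAlgebra.of K G g • θ (MonoidAlgebra.of K G g⁻¹ • v) = v) :
    Module.Projective (MonoidAlgebra K G) M := by
  let A := MonoidAlgebra K G
  let π : A ⊗[K] M →ₗ[A] M := TensorProduct.AlgebraTensorModule.lift
    ((LinearMap.toSpanSingleton A (M →ₗ[K] M)) LinearMap.id)
  let s₀ : M →ₗ[K] A ⊗[K] M := ∑ g : G,
    TensorProduct.mk K A M (MonoidAlgebra.of K G g) ∘ₗ θ ∘ₗ 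
      Algebra.lsmul K K M (MonoidAlgebra.of K G g⁻¹)
  have hs₀ : ∀ v, s₀ v = ∑ g : G, MonoidAlgebra.of K G g ⊗ₜ[K]
      θ (MonoidAlgebra.of K G g⁻¹ • v) := fun v => by
    simp [s₀, LinearMap.sum_apply]
  have hof : ∀ (h : G) v, s₀ (MonoidAlgebra.of K G h • v) = MonoidAlgebra.of K G h • s₀ v := by
    intro h v
    simp only [hs₀, Finset.smul_sum]
    rw [← Equiv.sum_comp (Equiv.mulLeft h)]
    refine Finset.sum_congr rfl fun g _ => ?_
    simp only [Equiv.coe_mulLeft, TensorProduct.smul_tmul', smul_eq_mul, ← map_mul, smul_smul]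
    simp [mul_assoc]
  let s : M →ₗ[A] A ⊗[K] M :=
    { s₀ with
      map_smul' := fun a v => by
        change s₀ (a • v) = a • s₀ v
        induction a using MonoidAlgebra.induction_linear with
        | zero => simp
        | add a b ha hb => simp only [add_smul, map_add, ha, hb]
        | single h r =>
          have : (MonoidAlgebra.single h r : A) = r • MonoidAlgebra.of K G h := by simp
          rw [this, smul_assoc, smul_assoc, map_smul, hof] }
  refine Module.Projective.of_split s π ?_
  ext v
  change π (s₀ v) = v
  rw [hs₀, map_sum]
  simpa [π] using hθ v
end Higman

/-! ### Restriction to a subgroup and fixed points -/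

/-- The criterion passes to a subgroup: sum the conjugates of `θ` over a transversal. -/
theorem exists_trace_eq_id_restrict {K G L V : Type*} [Field K] [Group G] [Fintype G] [Group L]
    [Fintype L] [AddCommGroup V] [Module K V] (ρ : Representation K G V) (f : L →* G)
    (hf : Function.Injective f) (θ : V →ₗ[K] V) (hθ : ∀ v, ∑ g : G, ρ g (θ (ρ g⁻¹ v)) = v) :
    ∃ θ' : V →ₗ[K] V, ∀ v, ∑ l : L, ρ (f l) (θ' (ρ (f l)⁻¹ v)) = v := by
  classical
  let e : L ≃ f.range := (MonoidHom.ofInjective hf).toEquiv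
  obtain ⟨T, hT, -⟩ := f.range.exists_isComplement_left 1
  refine ⟨∑ t : T, ρ (t : G)⁻¹ ∘ₗ θ ∘ₗ ρ (t : G), fun v => ?_⟩
  conv_rhs => rw [← hθ v]
  let d : T × f.range ≃ G := Equiv.ofBijective (fun x => (x.1 : G) * x.2) hT
  -- Inverting turns the decomposition of `G` into `t * l` into one into `l⁻¹ * t⁻¹`.
  rw [← Equiv.sum_comp (Equiv.inv G), ← Equiv.sum_comp d,
    Fintype.sum_prod_type_right, ← Equiv.sum_comp e, ← Equiv.sum_comp (Equiv.inv L)]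
  refine Finset.sum_congr rfl fun l _ => ?_
  simp only [LinearMap.sum_apply, map_sum]
  refine Finset.sum_congr rfl fun t _ => ?_
  have h : d (t, e l) = t * f l := rfl
  simp only [h, Equiv.inv_apply, mul_inv_rev, map_mul, map_inv, inv_inv, LinearMap.comp_apply,
    Module.End.mul_apply]

theorem of_smul_asModule {K G V : Type*} [Field K] [Group G] [AddCommGroup V] [Module K V]
    (ρ : Representation K G V) (g : G) (v : ρ.asModule) :
    MonoidAlgebra.of K G g • v = ρ.asModuleEquiv.symm (ρ g (ρ.asModuleEquiv v)) := by
  rw [Representation.asModuleEquiv_symm_map_rho, LinearEquiv.symm_apply_apply]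


/-- If `P` is a projective `F S_n`-module (viewed as a module over the group algebra),
then its `S_m`-fixed points form a projective `F S_{n-m}`-module (`n = m + k`). -/
theorem fixed_points_of_projective (p : ℕ) (hp : p.Prime) [CharP F p] [IsAlgClosed F]
    (ρ : Representation F (Equiv.Perm (Fin m ⊕ Fin k)) V)
    (hproj : Module.Projective (MonoidAlgebra F (Equiv.Perm (Fin m ⊕ Fin k))) ρ.asModule) :
    Module.Projective (MonoidAlgebra F (Equiv.Perm (Fin k))) (fixedPointRep F m k ρ).asModule := by
  classical
  obtain ⟨θ, hθ⟩ := exists_trace_eq_id_of_projective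
    (K := F) (G := Equiv.Perm (Fin m ⊕ Fin k)) (M := ρ.asModule)
  obtain ⟨θ', hθ'⟩ := exists_trace_eq_id_restrict ρ (Equiv.Perm.sumCongrHom (Fin m) (Fin k))
    Equiv.Perm.sumCongrHom_injective
    (ρ.asModuleEquiv.toLinearMap ∘ₗ θ ∘ₗ ρ.asModuleEquiv.symm.toLinearMap) (fun v => by
      have h := congrArg ρ.asModuleEquiv (hθ (ρ.asModuleEquiv.symm v))
      simpa only [of_smul_asModule, map_sum, LinearEquiv.apply_symm_apply,
        LinearMap.comp_apply, LinearEquiv.coe_coe] using h)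
  -- The norm element of `S_m`.
  let N : V →ₗ[F] V := ∑ σ : Equiv.Perm (Fin m), ρ (inlPerm m k σ)
  have hN : ∀ v, N v ∈ smFixed F m k ρ := by
    intro v σ
    simp only [N, LinearMap.sum_apply, map_sum, ← Module.End.mul_apply, ← map_mul]
    exact Equiv.sum_comp (Equiv.mulLeft σ) fun σ' => ρ (inlPerm m k σ') v
  let η : smFixed F m k ρ →ₗ[F] smFixed F m k ρ :=
    (N ∘ₗ θ').restrict fun v _ => hN (θ' v)
  let E := (fixedPointRep F m k ρ).asModuleEquiv
  refine projective_of_trace_eq_id (E.symm.toLinearMap ∘ₗ η ∘ₗ E.toLinearMap) fun v => ?_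
  apply E.injective
  have hw := hθ' (E v : V)
  simp only [of_smul_asModule, map_sum]
  apply Subtype.ext
  rw [Fintype.sum_prod_type_right] at hw
  refine Eq.trans ?_ hw
  rw [AddSubmonoidClass.coe_finsetSum]
  refine Finset.sum_congr rfl fun τ _ => ?_
  have hu : ρ (inrPerm m k τ⁻¹) (E v : V) ∈ smFixed F m k ρ :=
    smFixed_stable F m k ρ τ⁻¹ (E v).2
  -- On `S_m`-fixed vectors the right-hand factor `σ⁻¹` of the conjugation acts trivially.
  have hL : ∀ σ : Equiv.Perm (Fin m),
      ρ (Equiv.Perm.sumCongrHom (Fin m) (Fin k) (σ, τ))⁻¹ (E v : V) =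
        ρ (inrPerm m k τ⁻¹) (E v : V) := by
    intro σ
    have h : (Equiv.Perm.sumCongrHom (Fin m) (Fin k) (σ, τ))⁻¹ =
        inlPerm m k σ⁻¹ * inrPerm m k τ⁻¹ := by
      simp only [inlPerm, inrPerm, MonoidHom.comp_apply, ← map_mul, ← map_inv]
      simp only [MonoidHom.inl_apply, MonoidHom.inr_apply, Prod.mk_mul_mk, Prod.inv_mk, one_mul,
        mul_one]
    rw [h, map_mul]
    exact hu σ⁻¹
  have hR : ∀ σ : Equiv.Perm (Fin m), Equiv.Perm.sumCongrHom (Fin m) (Fin k) (σ, τ) =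
      inrPerm m k τ * inlPerm m k σ := by
    intro σ
    simp only [inlPerm, inrPerm, MonoidHom.comp_apply, ← map_mul]
    simp only [MonoidHom.inl_apply, MonoidHom.inr_apply, Prod.mk_mul_mk, one_mul, mul_one]
  simp only [hL]
  simp only [hR, map_mul, Module.End.mul_apply, ← map_sum]
  change ρ (inrPerm m k τ) (N (θ' (ρ (inrPerm m k τ⁻¹) (E v : V)))) = _
  simp only [N, LinearMap.sum_apply]
end

section
/- Let F be a field of odd prime characteristic p, n ≥ 2, m an integer with 1 ≤ m < n, and r an integer with r > n - m. Then the S_m-fixed subspace of the r-th exterior power ⋀^r S^{(n-1,1)} is zero, where S^{(n-1,1)} ⊂ F^n is the span of f_i = e_i - e_n (1 ≤ i ≤ n-1) and S_m ≤ S_n permutes {1,…,m}. If instead r = n - m (and r > 1), the fixed subspace is one-dimensional, spanned by (f_1 + ⋯ + f_m) ∧ f_{m+1} ∧ ⋯ ∧ f_{n-1}, and S_{n-m} acts on it by the sign character. -/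
/-! The vectors `f_x` with `x` different from the base point form a basis of
`V = S^{(n-1,1)}` whose dual basis consists of the coordinate functionals `e_x^*` restricted to `V`.
An element of `⋀^r V` is therefore determined by its Plücker coordinates, the values of
`e_{x_1}^* ∧ ⋯ ∧ e_{x_r}^*` for injective tuples `x` avoiding the base point (`eq_zero_of_plucker`).
A permutation of the coordinates permutes the tuples (`plucker_permAct`).

Let `v` be `S_m`-fixed. If two entries of `x` lie in the first block, the transposition of these
two entries shows that the coordinate at `x` equals its own negative, so it vanishes
in odd characteristic (`plucker_eq_zero_of_two_inl`). Collapsing the first block to the base point turns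
the other tuples into injections `Fin r → Fin k` (`collapse_injective`). There are none if
`r > k`. If `r = k`, each of them arises from one fixed tuple `stdTuple` by
reordering and by a transposition in `S_m`, so that `v` is determined by its coordinate at `stdTuple`
(`IsFixed.eq_zero_of_plucker_stdTuple`); this coordinate is `1` for the spanning wedge.

For the sign character it is enough to treat the transpositions of `S_{n-m}` that move the
base point. There `∑_x e_x^* = 0` on `V`: placing this sum in one slot of `stdTuple`
leaves only two coordinates of the wedge that do not vanish for trivial reasons, the
coordinate of the wedge and that of its image, which are therefore opposite
(`IsFixed.plucker_update_base`). -/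

open Equiv ExteriorAlgebra

set_option synthInstance.maxHeartbeats 1000000
set_option maxHeartbeats 1000000

variable (F : Type*) [Field F]

/-- The permutation representation of `Perm ι` on `ι → F`: `(σ • v) i = v (σ⁻¹ i)`. -/
noncomputable def permRep (ι : Type*) : Representation F (Equiv.Perm ι) (ι → F) where
  toFun σ := LinearMap.funLeft F F ⇑σ⁻¹
  map_one' := by ext v i; simp [LinearMap.funLeft]
  map_mul' σ τ := by ext v i; simp [LinearMap.funLeft, Equiv.Perm.mul_apply]

/-- The sum-of-coordinates linear functional on `ι → F`. -/
noncomputable def coordSum (ι : Type*) [Fintype ι] : (ι → F) →ₗ[F] F where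
  toFun v := ∑ i, v i
  map_add' := by intro a b; simp [Finset.sum_add_distrib]
  map_smul' := by intro c v; simp [Finset.mul_sum]

/-- The standard Specht module `S^{(n-1,1)}` inside `F^ι`: the kernel of the
sum-of-coordinates map, i.e. the span of the vectors `f_i = e_i - e_n`. -/
noncomputable def spechtStd (ι : Type*) [Fintype ι] : Submodule F (ι → F) :=
  LinearMap.ker (coordSum F ι)

theorem spechtStd_stable (ι : Type*) [Fintype ι] (σ : Equiv.Perm ι)
    {v : ι → F} (hv : v ∈ spechtStd F ι) : permRep F ι σ v ∈ spechtStd F ι := by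
  simp only [spechtStd, LinearMap.mem_ker, coordSum, permRep, LinearMap.funLeft,
    LinearMap.coe_mk, AddHom.coe_mk, MonoidHom.coe_mk, OneHom.coe_mk] at hv ⊢
  simp only [Function.comp_apply]
  rw [Equiv.sum_comp σ⁻¹ v]
  exact hv

/-- The representation of `Perm ι` on the standard Specht module `S^{(n-1,1)}`. -/
noncomputable def spechtRep (ι : Type*) [Fintype ι] :
    Representation F (Equiv.Perm ι) (spechtStd F ι) where
  toFun σ := (permRep F ι σ).restrict fun v hv => spechtStd_stable F ι σ hv
  map_one' := by ext v; simp [LinearMap.restrict_apply]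
  map_mul' σ τ := by ext v; simp [LinearMap.restrict_apply, map_mul]

variable (m k : ℕ)

theorem coordSum_single (ι : Type*) [Fintype ι] [DecidableEq ι] (x : ι) :
    coordSum F ι (Pi.single x (1 : F)) = 1 := by
  simp [coordSum, Finset.sum_pi_single']

/-- The vector `f_x = e_x - e_{n}` of the standard Specht module, where the base point
is the last element of the second block. -/
noncomputable def fvec (hk : 0 < k) (x : Fin m ⊕ Fin k) :
    spechtStd F (Fin m ⊕ Fin k) :=
  ⟨Pi.single x 1 - Pi.single (Sum.inr ⟨k - 1, by omega⟩) 1, by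
    simp only [spechtStd, LinearMap.mem_ker, map_sub, coordSum_single, sub_self]⟩

/-- The wedge `(f_1 + ⋯ + f_m) ∧ f_{m+1} ∧ ⋯ ∧ f_{n-1}` in `⋀^{n-m} S^{(n-1,1)}`
(`n = m + k`). -/
noncomputable def spanningWedge (hk : 0 < k) :
    ExteriorAlgebra F (spechtStd F (Fin m ⊕ Fin k)) :=
  ExteriorAlgebra.ιMulti F k fun j =>
    if j.val = 0 then ∑ i : Fin m, fvec F m k hk (Sum.inl i)
    else fvec F m k hk (Sum.inr ⟨j.val - 1, lt_of_le_of_lt (Nat.sub_le _ _) j.isLt⟩)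

/-! ### A basis of the standard module -/

/-- The standard module `S^{(n-1,1)}` for `n = m + k`. -/
local notation "V" => spechtStd F (Fin m ⊕ Fin k)

/-- The coordinate functional `e_x^*` restricted to the standard module. -/
noncomputable def coordFun (x : Fin m ⊕ Fin k) : Module.Dual F V :=
  (LinearMap.proj x).comp (Submodule.subtype _)

/-- The base point of the standard module: the last element of the second block. -/
def basePt (hk : 0 < k) : Fin k := ⟨k - 1, by omega⟩

@[simp] lemma coordFun_apply (x : Fin m ⊕ Fin k) (v : V) : coordFun F m k x v = v.1 x := rfl

lemma sum_coordFun : ∑ x, coordFun F m k x = 0 := by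
  ext v
  have h : coordSum F _ v.1 = 0 := LinearMap.mem_ker.mp v.2
  simpa [coordSum] using h

lemma coordFun_fvec (hk : 0 < k) (x y : Fin m ⊕ Fin k) (hx : x ≠ Sum.inr (basePt k hk)) :
    coordFun F m k x (fvec F m k hk y) = if x = y then 1 else 0 := by
  simp only [basePt] at hx
  simp [fvec, Pi.single_apply, hx]

lemma coordFun_spechtRep (σ : Equiv.Perm (Fin m ⊕ Fin k)) (x : Fin m ⊕ Fin k) (v : V) :
    coordFun F m k x (spechtRep F _ σ v) = coordFun F m k (σ⁻¹ x) v := rfl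

/-- The restriction of a vector of the standard module to the coordinates other than the base point. -/
noncomputable def restrictCoord (hk : 0 < k) :
    V →ₗ[F] ({x : Fin m ⊕ Fin k // x ≠ Sum.inr (basePt k hk)} → F) :=
  LinearMap.pi fun x => coordFun F m k x.1

lemma restrictCoord_bijective (hk : 0 < k) : Function.Bijective (restrictCoord F m k hk) := by
  constructor
  · rw [injective_iff_map_eq_zero]
    intro v hv
    have h1 : ∀ x, x ≠ Sum.inr (basePt k hk) → v.1 x = 0 := fun x hx => congrFun hv ⟨x, hx⟩
    have h2 : ∑ x, v.1 x = 0 := by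
      simpa using LinearMap.congr_fun (sum_coordFun F m k) v
    rw [Finset.sum_eq_single_of_mem _ (Finset.mem_univ _) (fun x _ hx => h1 x hx)] at h2
    ext x
    by_cases hx : x = Sum.inr (basePt k hk)
    · rw [hx]; exact h2
    · exact h1 x hx
  · intro g
    refine ⟨∑ y, g y • fvec F m k hk y.1, ?_⟩
    ext x
    simp only [restrictCoord, LinearMap.pi_apply, map_sum, map_smul,
      coordFun_fvec F m k hk _ _ x.2]
    simp [← Subtype.ext_iff]

/-- The basis of the standard module dual to the coordinate functionals away from the base point. -/
noncomputable def stdBasis (hk : 0 < k) :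
    Module.Basis {x : Fin m ⊕ Fin k // x ≠ Sum.inr (basePt k hk)} F V :=
  Module.Basis.ofEquivFun (LinearEquiv.ofBijective _ (restrictCoord_bijective F m k hk))

lemma stdBasis_coord (hk : 0 < k) (x) :
    (stdBasis F m k hk).coord x = coordFun F m k x.1 := by
  ext v
  simp [stdBasis, restrictCoord]

/-! ### Plücker coordinates on the exterior power -/

/-- The Plücker coordinate at the tuple `x`: the functional `e_{x_1}^* ∧ ⋯ ∧ e_{x_r}^*` on `⋀^r`. -/
noncomputable def plucker {r : ℕ} (x : Fin r → Fin m ⊕ Fin k) : Module.Dual F (⋀[F]^r V) :=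
  exteriorPower.pairingDual F V r (exteriorPower.ιMulti F r fun a => coordFun F m k (x a))

lemma plucker_ιMulti {r : ℕ} (x : Fin r → Fin m ⊕ Fin k) (v : Fin r → V) :
    plucker F m k x (exteriorPower.ιMulti F r v) =
      (Matrix.of fun i j => coordFun F m k (x j) (v i)).det := by
  simp [plucker, exteriorPower.pairingDual_ιMulti_ιMulti]

lemma eq_zero_of_plucker (hk : 0 < k) {r : ℕ} (v : ⋀[F]^r V)
    (h : ∀ x : Fin r → Fin m ⊕ Fin k, Function.Injective x →
      (∀ a, x a ≠ Sum.inr (basePt k hk)) → plucker F m k x v = 0) : v = 0 := by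
  classical
  let : LinearOrder {x : Fin m ⊕ Fin k // x ≠ Sum.inr (basePt k hk)} :=
    linearOrderOfSTO WellOrderingRel
  refine ((stdBasis F m k hk).exteriorPower r).ext_elem fun s => ?_
  rw [exteriorPower.basis_repr_apply, map_zero, Finsupp.zero_apply]
  have := h (fun a => (Set.powersetCard.ofFinEmbEquiv.symm s a).1)
    (Subtype.val_injective.comp (Set.powersetCard.ofFinEmbEquiv.symm s).injective)
    (fun a => (Set.powersetCard.ofFinEmbEquiv.symm s a).2)
  have hcoord : (stdBasis F m k hk).coord ∘ Set.powersetCard.ofFinEmbEquiv.symm s =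
      fun a => coordFun F m k (Set.powersetCard.ofFinEmbEquiv.symm s a).1 :=
    funext fun a => stdBasis_coord F m k hk _
  rw [← this, exteriorPower.ιMultiDual, plucker, exteriorPower.ιMulti_family, hcoord]

/-- The action of a permutation of the coordinates on `⋀^r S^{(n-1,1)}`. -/
noncomputable def permAct (r : ℕ) (σ : Equiv.Perm (Fin m ⊕ Fin k)) : ⋀[F]^r V →ₗ[F] ⋀[F]^r V :=
  exteriorPower.map r (spechtRep F _ σ)

lemma coe_permAct {r : ℕ} (σ : Equiv.Perm (Fin m ⊕ Fin k)) (v : ⋀[F]^r V) :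
    (permAct F m k r σ v : ExteriorAlgebra F V) =
      ExteriorAlgebra.map (spechtRep F _ σ) (v : ExteriorAlgebra F V) := by
  have : (Submodule.subtype _).comp (permAct F m k r σ) =
      (ExteriorAlgebra.map (spechtRep F _ σ)).toLinearMap.comp (Submodule.subtype _) := by
    apply exteriorPower.linearMap_ext
    ext w
    simp [permAct, ExteriorAlgebra.map_apply_ιMulti, exteriorPower.map_apply_ιMulti]
  exact LinearMap.congr_fun this v

lemma permAct_mul (r : ℕ) (σ τ : Equiv.Perm (Fin m ⊕ Fin k)) :
    permAct F m k r (σ * τ) = permAct F m k r σ ∘ₗ permAct F m k r τ := by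
  rw [permAct, permAct, permAct, ← exteriorPower.map_comp, map_mul]
  rfl

lemma permAct_one (r : ℕ) : permAct F m k r 1 = LinearMap.id := by
  rw [permAct, map_one]
  exact exteriorPower.map_id

lemma plucker_permAct {r : ℕ} (σ : Equiv.Perm (Fin m ⊕ Fin k)) (x : Fin r → Fin m ⊕ Fin k)
    (v : ⋀[F]^r V) :
    plucker F m k x (permAct F m k r σ v) = plucker F m k (⇑σ⁻¹ ∘ x) v := by
  have : plucker F m k x ∘ₗ permAct F m k r σ = plucker F m k (⇑σ⁻¹ ∘ x) := by
    apply exteriorPower.linearMap_ext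
    ext w
    simp only [LinearMap.compAlternatingMap_apply, LinearMap.comp_apply, permAct,
      exteriorPower.map_apply_ιMulti, plucker_ιMulti, Function.comp_apply, coordFun_spechtRep]
  exact LinearMap.congr_fun this v

lemma plucker_perm {r : ℕ} (τ : Equiv.Perm (Fin r)) (x : Fin r → Fin m ⊕ Fin k) :
    plucker F m k (x ∘ τ) = Equiv.Perm.sign τ • plucker F m k x := by
  have h := (exteriorPower.ιMulti F r).map_perm (fun a => coordFun F m k (x a)) τ
  simp only [plucker, Function.comp_def] at h ⊢
  rw [h, Units.smul_def, Units.smul_def, map_zsmul]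

lemma plucker_eq_zero_of_eq {r : ℕ} (x : Fin r → Fin m ⊕ Fin k) {a b : Fin r} (hab : a ≠ b)
    (h : x a = x b) : plucker F m k x = 0 := by
  rw [plucker, AlternatingMap.map_eq_zero_of_eq _ _ (by rw [h]) hab, map_zero]

lemma sum_plucker_update {r : ℕ} (x : Fin r → Fin m ⊕ Fin k) (a : Fin r) :
    ∑ z, plucker F m k (Function.update x a z) = 0 := by
  have h (z) : plucker F m k (Function.update x a z) = exteriorPower.pairingDual F V r
      (exteriorPower.ιMulti F r (Function.update (fun b => coordFun F m k (x b)) a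
        (coordFun F m k z))) := by
    rw [plucker]
    congr 2
    ext1 b
    by_cases hb : b = a
    · subst hb; simp
    · simp [hb]
  simp_rw [h, ← map_sum, ← AlternatingMap.map_update_sum, sum_coordFun]
  rw [AlternatingMap.map_update_zero, map_zero]

/-! ### Elements fixed by the first symmetric group -/

/-- Invariance under the subgroup `S_m` of `S_n`. -/
def IsFixed {r : ℕ} (v : ⋀[F]^r V) : Prop :=
  ∀ σ : Equiv.Perm (Fin m), permAct F m k r (inlPerm m k σ) v = v

/-- The spanning wedge as an element of the exterior power `⋀^k`. -/
noncomputable def wedge (hk : 0 < k) : ⋀[F]^k V :=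
  exteriorPower.ιMulti F k fun j =>
    if j.val = 0 then ∑ i : Fin m, fvec F m k hk (Sum.inl i)
    else fvec F m k hk (Sum.inr ⟨j.val - 1, lt_of_le_of_lt (Nat.sub_le _ _) j.isLt⟩)

variable {F m k}

@[simp] lemma inlPerm_inl (σ : Equiv.Perm (Fin m)) (i : Fin m) :
    inlPerm m k σ (Sum.inl i) = Sum.inl (σ i) := rfl

@[simp] lemma inlPerm_inr (σ : Equiv.Perm (Fin m)) (j : Fin k) :
    inlPerm m k σ (Sum.inr j) = Sum.inr j := rfl

@[simp] lemma inrPerm_inl (σ : Equiv.Perm (Fin k)) (i : Fin m) :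
    inrPerm m k σ (Sum.inl i) = Sum.inl i := rfl

@[simp] lemma inrPerm_inr (σ : Equiv.Perm (Fin k)) (j : Fin k) :
    inrPerm m k σ (Sum.inr j) = Sum.inr (σ j) := rfl

lemma IsFixed.plucker_comp {r : ℕ} {v : ⋀[F]^r V} (hv : IsFixed F m k v)
    (σ : Equiv.Perm (Fin m)) (x : Fin r → Fin m ⊕ Fin k) :
    plucker F m k (inlPerm m k σ ∘ x) v = plucker F m k x v := by
  have h := plucker_permAct F m k (inlPerm m k σ⁻¹) x v
  rw [hv, map_inv, inv_inv] at h
  exact h.symm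

lemma IsFixed.permAct_inrPerm {r : ℕ} {v : ⋀[F]^r V} (hv : IsFixed F m k v)
    (τ : Equiv.Perm (Fin k)) : IsFixed F m k (permAct F m k r (inrPerm m k τ) v) := by
  intro σ
  have h : inlPerm m k σ * inrPerm m k τ = inrPerm m k τ * inlPerm m k σ := by
    ext x; rcases x with i | j <;> simp
  rw [← LinearMap.comp_apply, ← permAct_mul, h, permAct_mul, LinearMap.comp_apply, hv]

/-- The transposition of the two entries in the first block fixes `v` and reverses the sign of the
coordinate. -/
lemma plucker_eq_zero_of_two_inl (h2 : (2 : F) ≠ 0) {r : ℕ} {v : ⋀[F]^r V}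
    (hv : IsFixed F m k v) (x : Fin r → Fin m ⊕ Fin k) {a b : Fin r} (hab : a ≠ b)
    {i j : Fin m} (ha : x a = Sum.inl i) (hb : x b = Sum.inl j) : plucker F m k x v = 0 := by
  by_cases hx : Function.Injective x
  · have hcomp : inlPerm m k (Equiv.swap i j) ∘ x = x ∘ Equiv.swap a b := by
      ext1 c
      by_cases hca : c = a
      · subst hca; simp [ha, hb]
      by_cases hcb : c = b
      · subst hcb; simp [ha, hb]
      simp only [Function.comp_apply, Equiv.swap_apply_of_ne_of_ne hca hcb]
      rcases hc : x c with l | l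
      · rw [inlPerm_inl, Equiv.swap_apply_of_ne_of_ne]
        · rintro rfl; exact hca (hx (hc.trans ha.symm))
        · rintro rfl; exact hcb (hx (hc.trans hb.symm))
      · rfl
    have h := hv.plucker_comp (Equiv.swap i j) x
    rw [hcomp, plucker_perm, Equiv.Perm.sign_swap hab] at h
    simp only [Units.smul_def, Units.val_neg, Units.val_one, neg_smul, one_smul,
      LinearMap.neg_apply] at h
    have : 2 * plucker F m k x v = 0 := by linear_combination -h
    exact (mul_eq_zero.mp this).resolve_left h2
  · simp only [Function.Injective, not_forall] at hx
    obtain ⟨c, d, hcd, hne⟩ := hx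
    rw [plucker_eq_zero_of_eq F m k x hne hcd, LinearMap.zero_apply]

/-- The map sending the first block to the base point and fixing the second block. -/
def collapse (hk : 0 < k) : Fin m ⊕ Fin k → Fin k := Sum.elim (fun _ => basePt k hk) id

lemma collapse_injective (hk : 0 < k) {r : ℕ} {x : Fin r → Fin m ⊕ Fin k}
    (hx : Function.Injective x) (hb : ∀ a, x a ≠ Sum.inr (basePt k hk))
    (h : ∀ a b i j, x a = Sum.inl i → x b = Sum.inl j → a = b) :
    Function.Injective (collapse hk ∘ x) := by
  intro a b hab
  simp only [Function.comp_apply] at hab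
  rcases ha : x a with i | i <;> rcases hb' : x b with j | j <;>
    simp only [ha, hb', collapse, Sum.elim_inl, Sum.elim_inr, id] at hab
  · exact h a b i j ha hb'
  · exact absurd (by rw [hb', hab]) (hb b)
  · exact absurd (by rw [ha, hab]) (hb a)
  · exact hx (by rw [ha, hb', hab])

lemma IsFixed.eq_zero_of_lt (h2 : (2 : F) ≠ 0) (hk : 0 < k) {r : ℕ} (hr : k < r)
    {v : ⋀[F]^r V} (hv : IsFixed F m k v) : v = 0 := by
  refine eq_zero_of_plucker F m k hk v fun x hx hb => ?_
  by_contra hne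
  have := Fintype.card_le_of_injective _ (collapse_injective hk hx hb fun a b i j ha hb' => by
    by_contra hab
    exact hne (plucker_eq_zero_of_two_inl h2 hv x hab ha hb'))
  simp only [Fintype.card_fin] at this
  omega

/-- The tuple `(1, m+1, …, n-1)`, listing the first element of the first block and then the elements
of the second block other than the base point. -/
def stdTuple (hm : 1 ≤ m) (j : Fin k) : Fin m ⊕ Fin k :=
  if j.val = 0 then Sum.inl ⟨0, hm⟩
  else Sum.inr ⟨j.val - 1, lt_of_le_of_lt (Nat.sub_le _ _) j.isLt⟩

lemma stdTuple_ne_base (hm : 1 ≤ m) (hk : 0 < k) (j : Fin k) :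
    stdTuple hm j ≠ Sum.inr (basePt k hk) := by
  unfold stdTuple
  split_ifs with h
  · simp
  · simp only [ne_eq, Sum.inr.injEq, basePt, Fin.ext_iff]
    omega

lemma stdTuple_injective (hm : 1 ≤ m) : Function.Injective (stdTuple (k := k) hm) := by
  intro a b hab
  unfold stdTuple at hab
  split_ifs at hab with ha hb hb
  · exact Fin.ext (by omega)
  · simp only [Sum.inr.injEq, Fin.mk.injEq] at hab
    exact Fin.ext (by omega)

lemma stdTuple_inl {hm : 1 ≤ m} {j : Fin k} {i : Fin m} (h : stdTuple hm j = Sum.inl i) :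
    j.val = 0 ∧ i = ⟨0, hm⟩ := by
  unfold stdTuple at h
  split_ifs at h with h0
  exact ⟨h0, (Sum.inl.inj h).symm⟩

/-- The fixed subspace of `⋀^k` is at most one-dimensional: a fixed element is determined by a single
Plücker coordinate. -/
lemma IsFixed.eq_zero_of_plucker_stdTuple (h2 : (2 : F) ≠ 0) (hm : 1 ≤ m) (hk : 0 < k)
    {v : ⋀[F]^k V} (hv : IsFixed F m k v) (h0 : plucker F m k (stdTuple hm) v = 0) : v = 0 := by
  refine eq_zero_of_plucker F m k hk v fun x hx hb => ?_
  by_contra hne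
  have huniq : ∀ a b i j, x a = Sum.inl i → x b = Sum.inl j → a = b := fun a b i j ha hb' => by
    by_contra hab
    exact hne (plucker_eq_zero_of_two_inl h2 hv x hab ha hb')
  have hy := Finite.injective_iff_bijective.mp (collapse_injective hk hx hb huniq)
  have hy0 := Finite.injective_iff_bijective.mp
    (collapse_injective hk (stdTuple_injective hm) (stdTuple_ne_base hm hk)
      fun a b i j ha hb' => Fin.ext ((stdTuple_inl ha).1.trans (stdTuple_inl hb').1.symm))
  let τ : Equiv.Perm (Fin k) := (Equiv.ofBijective _ hy).trans (Equiv.ofBijective _ hy0).symm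
  have hτ : ∀ a, collapse hk (stdTuple hm (τ a)) = collapse hk (x a) := fun a =>
    (Equiv.ofBijective _ hy0).apply_symm_apply _
  -- Some entry of `x` is collapsed to the base point; it lies in the first block.
  obtain ⟨a, ha⟩ := hy.2 (basePt k hk)
  obtain ⟨i, hi⟩ : ∃ i, x a = Sum.inl i := by
    rcases h : x a with i | j
    · exact ⟨i, rfl⟩
    · simp only [Function.comp_apply, h, collapse, Sum.elim_inr, id] at ha
      exact absurd (by rw [h, ha]) (hb a)
  have hxeq : x = inlPerm m k (Equiv.swap ⟨0, hm⟩ i) ∘ (stdTuple hm ∘ τ) := by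
    ext1 c
    have hc := hτ c
    have hs := stdTuple_ne_base hm hk (τ c)
    simp only [Function.comp_apply]
    rcases h : x c with i' | j <;> rcases h' : stdTuple hm (τ c) with l | l <;>
      simp only [h, h', collapse, Sum.elim_inl, Sum.elim_inr, id] at hc
    · obtain rfl := huniq a c i i' hi h
      obtain rfl : i = i' := Sum.inl.inj (hi.symm.trans h)
      simp [(stdTuple_inl h').2]
    · exact absurd (by rw [h', hc]) hs
    · exact absurd (by rw [h, hc]) (hb c)
    · simp [hc]
  apply hne
  rw [hxeq, hv.plucker_comp, plucker_perm, LinearMap.smul_apply, h0, smul_zero]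

/-! ### The spanning wedge -/

lemma coe_wedge (hk : 0 < k) :
    (wedge F m k hk : ExteriorAlgebra F V) = spanningWedge F m k hk := rfl

lemma spechtRep_fvec (hk : 0 < k) (σ : Equiv.Perm (Fin m)) (x : Fin m ⊕ Fin k) :
    spechtRep F _ (inlPerm m k σ) (fvec F m k hk x) = fvec F m k hk (inlPerm m k σ x) := by
  have h (y z : Fin m ⊕ Fin k) : (inlPerm m k σ)⁻¹ z = y ↔ z = inlPerm m k σ y := by
    rw [Equiv.Perm.inv_eq_iff_eq]
  ext z
  change (fvec F m k hk x).1 ((inlPerm m k σ)⁻¹ z) = _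
  simp only [fvec, Pi.sub_apply, Pi.single_apply, h, inlPerm_inr]

lemma wedge_isFixed (hk : 0 < k) : IsFixed F m k (wedge F m k hk) := by
  intro σ
  rw [permAct, wedge, exteriorPower.map_apply_ιMulti]
  congr 1
  ext1 j
  simp only [Function.comp_apply]
  split_ifs with h
  · rw [map_sum]
    simp only [spechtRep_fvec, inlPerm_inl]
    exact Equiv.sum_comp σ fun i => fvec F m k hk (Sum.inl i)
  · rw [spechtRep_fvec, inlPerm_inr]

lemma plucker_wedge (hm : 1 ≤ m) (hk : 0 < k) :
    plucker F m k (stdTuple hm) (wedge F m k hk) = 1 := by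
  rw [wedge, plucker_ιMulti, ← Matrix.det_one (n := Fin k)]
  congr 1
  ext i j
  have hx := stdTuple_ne_base hm hk j
  rw [Matrix.of_apply, Matrix.one_apply]
  split_ifs with h hij hij
  · rw [map_sum]
    simp only [coordFun_fvec F m k hk _ _ hx]
    have hj : stdTuple hm j = Sum.inl ⟨0, hm⟩ := by rw [stdTuple, if_pos (hij ▸ h)]
    simp [hj]
  · rw [map_sum]
    simp only [coordFun_fvec F m k hk _ _ hx]
    have hj : ¬ j.val = 0 := fun hj => hij (Fin.ext (by omega))
    simp [stdTuple, hj]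
  · rw [coordFun_fvec F m k hk _ _ hx, if_pos]
    rw [← hij, stdTuple, if_neg h]
  · rw [coordFun_fvec F m k hk _ _ hx, if_neg]
    rw [show Sum.inr _ = stdTuple hm i from by rw [stdTuple, if_neg h]]
    exact fun h' => hij (stdTuple_injective hm h').symm

/-! ### The sign character -/

/-- On the standard module the coordinate functionals add up to zero. Inserted in a slot of
`stdTuple`, their sum keeps only two terms on an `S_m`-fixed element. -/
lemma IsFixed.plucker_update_base (h2 : (2 : F) ≠ 0) (hm : 1 ≤ m) (hk : 0 < k)
    {v : ⋀[F]^k V} (hv : IsFixed F m k v) {a : Fin k} (ha : a.val ≠ 0) :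
    plucker F m k (Function.update (stdTuple hm) a (Sum.inr (basePt k hk))) v =
      - plucker F m k (stdTuple hm) v := by
  have h := LinearMap.congr_fun (sum_plucker_update F m k (stdTuple hm) a) v
  rw [LinearMap.sum_apply, Finset.sum_eq_add (Sum.inr (basePt k hk)) (stdTuple hm a)
    (stdTuple_ne_base hm hk a).symm _ (by simp) (by simp), Function.update_eq_self] at h
  · exact eq_neg_of_add_eq_zero_left h
  · rintro z - ⟨hz1, hz2⟩
    rcases z with i | j
    · have h0 : (⟨0, hk⟩ : Fin k) ≠ a := fun h => ha (by rw [← h])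
      refine plucker_eq_zero_of_two_inl h2 hv _ h0 (i := ⟨0, hm⟩) (j := i) ?_ (by simp)
      rw [Function.update_of_ne h0]
      simp [stdTuple]
    · -- The entry `j` already occurs in `stdTuple`, at position `j + 1`.
      have hj : j.val + 1 < k := by
        have : j ≠ basePt k hk := fun h => hz1 (by rw [h])
        simp only [basePt, ne_eq, Fin.ext_iff] at this
        omega
      have hs : stdTuple hm (⟨j.val + 1, hj⟩ : Fin k) = Sum.inr j := by simp [stdTuple]
      have hne : (⟨j.val + 1, hj⟩ : Fin k) ≠ a := fun h => hz2 (by rw [← hs, h])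
      rw [plucker_eq_zero_of_eq F m k _ hne, LinearMap.zero_apply]
      rw [Function.update_of_ne hne, Function.update_self, hs]

/-- The image of the wedge is again `S_m`-fixed, so it suffices to compare one coordinate. -/
lemma permAct_swap_base (h2 : (2 : F) ≠ 0) (hm : 1 ≤ m) (hk : 0 < k) {j : Fin k}
    (hj : j ≠ basePt k hk) :
    permAct F m k k (inrPerm m k (Equiv.swap j (basePt k hk))) (wedge F m k hk) =
      - wedge F m k hk := by
  have hj' : j.val + 1 < k := by
    simp only [basePt, ne_eq, Fin.ext_iff] at hj
    omega
  have hw := wedge_isFixed (F := F) (m := m) hk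
  have hs : stdTuple hm (⟨j.val + 1, hj'⟩ : Fin k) = Sum.inr j := by simp [stdTuple]
  have htup : ⇑(inrPerm m k (Equiv.swap j (basePt k hk)))⁻¹ ∘ stdTuple hm =
      Function.update (stdTuple hm) ⟨j.val + 1, hj'⟩ (Sum.inr (basePt k hk)) := by
    ext1 a
    rw [← map_inv, Equiv.swap_inv, Function.comp_apply]
    by_cases haj : a = ⟨j.val + 1, hj'⟩
    · subst haj
      rw [hs, Function.update_self, inrPerm_inr, Equiv.swap_apply_left]
    · rw [Function.update_of_ne haj]
      have hb := stdTuple_ne_base hm hk a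
      rcases h : stdTuple hm a with i | l
      · rfl
      · rw [inrPerm_inr, Equiv.swap_apply_of_ne_of_ne]
        · rintro rfl
          exact haj (stdTuple_injective hm (h.trans hs.symm))
        · rintro rfl
          exact hb h
  rw [← add_eq_zero_iff_eq_neg]
  refine IsFixed.eq_zero_of_plucker_stdTuple h2 hm hk (fun σ => ?_) ?_
  · rw [map_add, hw.permAct_inrPerm, hw]
  · rw [map_add, plucker_permAct, htup, hw.plucker_update_base h2 hm hk (by simp),
      neg_add_cancel]

lemma permAct_swap (h2 : (2 : F) ≠ 0) (hm : 1 ≤ m) (hk : 0 < k) {i j : Fin k} (hij : i ≠ j) :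
    permAct F m k k (inrPerm m k (Equiv.swap i j)) (wedge F m k hk) = - wedge F m k hk := by
  by_cases hi : i = basePt k hk
  · subst hi
    rw [Equiv.swap_comm]
    exact permAct_swap_base h2 hm hk hij.symm
  by_cases hj : j = basePt k hk
  · subst hj
    exact permAct_swap_base h2 hm hk hij
  -- Conjugate `(i b)` by `(j b)`, where `b` is the base point.
  rw [Equiv.swap_comm, ← Equiv.swap_mul_swap_mul_swap hi hij, Equiv.swap_comm _ j, map_mul,
    map_mul, permAct_mul, permAct_mul]
  simp only [LinearMap.comp_apply, permAct_swap_base h2 hm hk hi,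
    permAct_swap_base h2 hm hk hj, map_neg, neg_neg]

lemma permAct_inrPerm_wedge (h2 : (2 : F) ≠ 0) (hm : 1 ≤ m) (hk : 0 < k)
    (τ : Equiv.Perm (Fin k)) :
    permAct F m k k (inrPerm m k τ) (wedge F m k hk) =
      ((Equiv.Perm.sign τ : ℤ) : F) • wedge F m k hk := by
  induction τ using Equiv.Perm.swap_induction_on with
  | one => simp [permAct_one]
  | swap_mul f x y hxy ih =>
    rw [map_mul, permAct_mul, LinearMap.comp_apply, ih, map_smul, permAct_swap h2 hm hk hxy,
      Equiv.Perm.sign_mul, Equiv.Perm.sign_swap hxy]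
    simp only [neg_mul, one_mul, Units.val_neg, Int.cast_neg, smul_neg]
    exact (neg_smul _ _).symm

variable (F m k)

/-- Let `F` have odd prime characteristic `p`, `1 ≤ m < n`, `n = m + k`.  If `r > n - m`
then the `S_m`-fixed subspace of `⋀^r S^{(n-1,1)}` is zero; if `r = n - m = k > 1` it is
the line spanned by `(f_1 + ⋯ + f_m) ∧ f_{m+1} ∧ ⋯ ∧ f_{n-1}`, on which `S_{n-m}` acts
by the sign character. -/
theorem fixed_points_exterior_power_specht (p : ℕ) (hp : p.Prime) (hodd : p ≠ 2)
    [CharP F p] (hm : 1 ≤ m) (hk : 0 < k) (r : ℕ) :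
    (k < r → {v : ExteriorAlgebra F (spechtStd F (Fin m ⊕ Fin k)) |
        v ∈ ⋀[F]^r (spechtStd F (Fin m ⊕ Fin k)) ∧
        ∀ σ : Equiv.Perm (Fin m),
          ExteriorAlgebra.map (spechtRep F _ (inlPerm m k σ)) v = v} = {0})
    ∧ (1 < k →
      ({v : ExteriorAlgebra F (spechtStd F (Fin m ⊕ Fin k)) |
        v ∈ ⋀[F]^k (spechtStd F (Fin m ⊕ Fin k)) ∧
        ∀ σ : Equiv.Perm (Fin m),
          ExteriorAlgebra.map (spechtRep F _ (inlPerm m k σ)) v = v}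
        = ↑(Submodule.span F {spanningWedge F m k hk}))
      ∧ ∀ τ : Equiv.Perm (Fin k),
          ExteriorAlgebra.map (spechtRep F _ (inrPerm m k τ)) (spanningWedge F m k hk)
            = ((Equiv.Perm.sign τ : ℤ) : F) • spanningWedge F m k hk) := by
  have h2 : (2 : F) ≠ 0 := by
    intro h
    have h' : ((2 : ℕ) : F) = 0 := by exact_mod_cast h
    exact hodd ((Nat.prime_dvd_prime_iff_eq hp Nat.prime_two).mp
      ((CharP.cast_eq_zero_iff F p 2).mp h'))
  have hfix {s : ℕ} (v : ⋀[F]^s (spechtStd F (Fin m ⊕ Fin k))) : IsFixed F m k v ↔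
      ∀ σ : Equiv.Perm (Fin m), ExteriorAlgebra.map (spechtRep F _ (inlPerm m k σ))
        (v : ExteriorAlgebra F (spechtStd F (Fin m ⊕ Fin k))) = v := by
    simp only [IsFixed, ← coe_permAct, Subtype.ext_iff]
  refine ⟨fun hr => ?_, fun _ => ⟨?_, fun τ => ?_⟩⟩
  · ext v
    simp only [Set.mem_ofPred_eq, Set.mem_singleton_iff]
    constructor
    · rintro ⟨hv, hσ⟩
      exact congrArg Subtype.val (((hfix ⟨v, hv⟩).mpr hσ).eq_zero_of_lt h2 hk hr)
    · rintro rfl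
      exact ⟨Submodule.zero_mem _, fun σ => map_zero _⟩
  · have hw := wedge_isFixed (F := F) (m := m) hk
    ext v
    simp only [Set.mem_ofPred_eq, SetLike.mem_coe, Submodule.mem_span_singleton, ← coe_wedge]
    constructor
    · rintro ⟨hv, hσ⟩
      have hv' := (hfix ⟨v, hv⟩).mpr hσ
      refine ⟨plucker F m k (stdTuple hm) ⟨v, hv⟩, ?_⟩
      have h := IsFixed.eq_zero_of_plucker_stdTuple h2 hm hk
        (v := ⟨v, hv⟩ - plucker F m k (stdTuple hm) ⟨v, hv⟩ • wedge F m k hk)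
        (fun σ => by rw [map_sub, map_smul, hv', hw])
        (by rw [map_sub, map_smul, plucker_wedge, smul_eq_mul, mul_one, sub_self])
      exact (congrArg Subtype.val (sub_eq_zero.mp h)).symm
    · rintro ⟨c, rfl⟩
      refine ⟨Submodule.smul_mem _ _ (wedge F m k hk).2, fun σ => ?_⟩
      rw [map_smul, (hfix _).mp hw]
  · rw [← coe_wedge, ← coe_permAct, permAct_inrPerm_wedge h2 hm hk]
    rfl
end
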